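/- (Counterexample showing no algorithm can be Bayes consistent for the Wen et al. model with stochastic labels.) Let Y = {1,2}. Define Q ∈ Δ(Y) by Q(1) = 2/3, Q(2) = 1/3 and the kernel M by the product form M(y)(s) = (∏_{k ∈ s} q(y,k))·(∏_{j ∉ s}(1 − q(y,j))) with q(1,1) = 1, q(1,2) = 2/3, q(2,2) = 1, q(2,1) = 0. Define Q̂ ∈ Δ(Y) by Q̂(1) = 1/3, Q̂(2) = 2/3 and M̂ by the same product form with q̂(1,1) = 1, q̂(1,2) = 1/3, q̂(2,2) = 1, q̂(2,1) = 1/2. Then both pairs induce the same bag distribution, namely P({1}) = 2/9, P({2}) = 3/9, P({1,2}) = 4/9 (and 0 on the empty bag), while argmax Q = {1} and argmax Q̂ = {2}, which are different. -/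

import Mathlib

/-- A probability vector on a finite type `T`. -/
def IsProbVec {T : Type*} [Fintype T] (Q : T → ℝ) : Prop :=
  (∀ t, 0 ≤ Q t) ∧ ∑ t, Q t = 1

/-- The argmax set of a real-valued function on labels. -/
def argmaxSet {Y : Type*} (Q : Y → ℝ) : Set Y := {y | ∀ y', Q y' ≤ Q y}

/-- The independent-inclusion bag generation model of Wen et al. -/
def Mwen {Y : Type*} [Fintype Y] [DecidableEq Y] (q : Y → Y → ℝ) :
    Y → Finset Y → ℝ :=
  fun y s => (∏ k ∈ s, q y k) * ∏ l ∈ sᶜ, (1 - q y l)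

/- Labels `1, 2` of the paper are encoded as `0, 1 : Fin 2`. -/

/-- The label distribution `Q(1) = 2/3, Q(2) = 1/3`. -/
noncomputable def Qa : Fin 2 → ℝ := ![2/3, 1/3]

/-- The label distribution `Q̂(1) = 1/3, Q̂(2) = 2/3`. -/
noncomputable def Qb : Fin 2 → ℝ := ![1/3, 2/3]

/-- Inclusion probabilities `q(1,1)=1, q(1,2)=2/3, q(2,1)=0, q(2,2)=1`. -/
noncomputable def qa : Fin 2 → Fin 2 → ℝ := ![![1, 2/3], ![0, 1]]

/-- Inclusion probabilities `q̂(1,1)=1, q̂(1,2)=1/3, q̂(2,1)=1/2, q̂(2,2)=1`. -/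
noncomputable def qb : Fin 2 → Fin 2 → ℝ := ![![1, 1/3], ![1/2, 1]]

theorem Mwen_nonneg {Y : Type*} [Fintype Y] [DecidableEq Y] {q : Y → Y → ℝ} {y : Y}
    (h0 : ∀ k, 0 ≤ q y k) (h1 : ∀ k, q y k ≤ 1) (s : Finset Y) : 0 ≤ Mwen q y s :=
  mul_nonneg (Finset.prod_nonneg fun k _ => h0 k)
    (Finset.prod_nonneg fun k _ => sub_nonneg.2 (h1 k))

theorem sum_Mwen {Y : Type*} [Fintype Y] [DecidableEq Y] (q : Y → Y → ℝ) (y : Y) :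
    ∑ s, Mwen q y s = 1 := by
  simp only [Mwen, ← Fintype.prod_add, add_sub_cancel, Finset.prod_const_one]

theorem isProbVec_Mwen {Y : Type*} [Fintype Y] [DecidableEq Y] {q : Y → Y → ℝ} {y : Y}
    (h0 : ∀ k, 0 ≤ q y k) (h1 : ∀ k, q y k ≤ 1) : IsProbVec (Mwen q y) :=
  ⟨Mwen_nonneg h0 h1, sum_Mwen q y⟩

/-- On two labels, the bag probability is a product over both labels. -/
theorem Mwen_fin_two (q : Fin 2 → Fin 2 → ℝ) (y : Fin 2) (s : Finset (Fin 2)) :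
    Mwen q y s =
      (if 0 ∈ s then q y 0 else 1 - q y 0) * (if 1 ∈ s then q y 1 else 1 - q y 1) := by
  have h : Mwen q y s = ∏ k, if k ∈ s then q y k else 1 - q y k := by
    rw [Finset.prod_ite]
    simp [Mwen, Finset.filter_notMem_eq_sdiff,
      Finset.compl_eq_univ_sdiff]
  rw [h, Fin.prod_univ_two]

theorem argmaxSet_Qa : argmaxSet Qa = {0} := by
  ext y
  fin_cases y <;> norm_num [argmaxSet, Qa, Fin.forall_fin_two]

theorem argmaxSet_Qb : argmaxSet Qb = {1} := by
  ext y
  fin_cases y <;> norm_num [argmaxSet, Qb, Fin.forall_fin_two]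

/-- Counterexample showing that no algorithm can be Bayes consistent for the
Wen et al. model with stochastic labels: the two scenarios `(Qa, Mwen qa)` and
`(Qb, Mwen qb)` induce exactly the same bag distribution
(`P({1}) = 2/9, P({2}) = 3/9, P({1,2}) = 4/9`, `P(∅) = 0`), yet
`argmax Qa = {1} ≠ {2} = argmax Qb`. -/
theorem wen_stochastic_counterexample :
    IsProbVec Qa ∧ IsProbVec Qb ∧
    (∀ y : Fin 2, IsProbVec (Mwen qa y)) ∧
    (∀ y : Fin 2, IsProbVec (Mwen qb y)) ∧
    (∀ s : Finset (Fin 2),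
      ∑ y, Qa y * Mwen qa y s = ∑ y, Qb y * Mwen qb y s) ∧
    (∑ y, Qa y * Mwen qa y ({0} : Finset (Fin 2)) = 2/9) ∧
    (∑ y, Qa y * Mwen qa y ({1} : Finset (Fin 2)) = 3/9) ∧
    (∑ y, Qa y * Mwen qa y ({0, 1} : Finset (Fin 2)) = 4/9) ∧
    (∑ y, Qa y * Mwen qa y (∅ : Finset (Fin 2)) = 0) ∧
    argmaxSet Qa = {0} ∧ argmaxSet Qb = {1} ∧
    argmaxSet Qa ≠ argmaxSet Qb := by
  refine ⟨?_, ?_, fun y => isProbVec_Mwen ?_ ?_, fun y => isProbVec_Mwen ?_ ?_, fun s => ?_,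
    ?_, ?_, ?_, ?_, argmaxSet_Qa, argmaxSet_Qb, ?_⟩
  · norm_num [IsProbVec, Qa, Fin.forall_fin_two]
  · norm_num [IsProbVec, Qb, Fin.forall_fin_two]
  · fin_cases y <;> norm_num [qa, Fin.forall_fin_two]
  · fin_cases y <;> norm_num [qa, Fin.forall_fin_two]
  · fin_cases y <;> norm_num [qb, Fin.forall_fin_two]
  · fin_cases y <;> norm_num [qb, Fin.forall_fin_two]
  · by_cases h0 : 0 ∈ s <;> by_cases h1 : 1 ∈ s <;>
      norm_num [Mwen_fin_two, Qa, Qb, qa, qb, h0, h1]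
  · norm_num [Mwen_fin_two, Qa, qa]
  · norm_num [Mwen_fin_two, Qa, qa]
  · norm_num [Mwen_fin_two, Qa, qa]
  · norm_num [Mwen_fin_two, Qa, qa]
  · simp [argmaxSet_Qa, argmaxSet_Qb]
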